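/- arXiv:nlin/0211022 — 2 statements merged into one kernel-verified Lean document; each statement's English description precedes it below -/
import Mathlib

section
/- Let t0 ∈ ℂ with t0 ≠ 0 and t0 ≠ 1, and let a1, a2, a3, a4 ∈ ℂ. Let y : ℝ → ℂ be twice differentiable with y(τ) ∉ {0, 1, t0} for all τ ∈ ℝ, and suppose y satisfies the autonomous limit equation of the sixth Painlevé equation: y'' = (1/2)·(1/y + 1/(y−1) + 1/(y−t0))·(y')² + (y(y−1)(y−t0)/(t0²(t0−1)²))·(a1 + a2·t0/y² + a3·(t0−1)/(y−1)² + a4·t0(t0−1)/(y−t0)²). Then the function D0(τ) = t0²(t0−1)²·(y'(τ))²/(2·y(τ)(y(τ)−1)(y(τ)−t0)) − a1·y(τ) + a2·t0/y(τ) + a3·(t0−1)/(y(τ)−1) + a4·t0(t0−1)/(y(τ)−t0) is constant on ℝ, i.e. D0 is a first integral of the autonomous limit equation. -/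
/-! Write `P = y (y - 1) (y - t0)` and `K = t0² (t0 - 1)²`. Since
`P' / P = (1/y + 1/(y - 1) + 1/(y - t0)) y'`, the quadratic term in `y'` of the equation is exactly
the one that makes `(K y'² / (2 P))' = y' (a1 + a2 t0/y² + a3 (t0 - 1)/(y - 1)² + …)`. The right-hand
side is minus the derivative of the remaining terms of `D0`, so `D0` has derivative zero
everywhere on `ℝ` and is constant. -/


/-- The function `D0` is a first integral of the autonomous limit of the
sixth Painlevé equation. -/
theorem autonomous_PVI_first_integral
    (t0 a1 a2 a3 a4 : ℂ) (ht0 : t0 ≠ 0) (ht1 : t0 ≠ 1)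
    (y : ℝ → ℂ)
    (hy : Differentiable ℝ y) (hy' : Differentiable ℝ (deriv y))
    (hvals : ∀ τ : ℝ, y τ ≠ 0 ∧ y τ ≠ 1 ∧ y τ ≠ t0)
    (hode : ∀ τ : ℝ,
      deriv (deriv y) τ =
        (1/2) * (1/(y τ) + 1/(y τ - 1) + 1/(y τ - t0)) * (deriv y τ)^2
        + (y τ * (y τ - 1) * (y τ - t0) / (t0^2 * (t0 - 1)^2)) *
          (a1 + a2 * t0 / (y τ)^2 + a3 * (t0 - 1) / (y τ - 1)^2
            + a4 * t0 * (t0 - 1) / (y τ - t0)^2)) :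
    ∀ τ₁ τ₂ : ℝ,
      (t0^2 * (t0 - 1)^2 * (deriv y τ₁)^2
          / (2 * y τ₁ * (y τ₁ - 1) * (y τ₁ - t0))
        - a1 * y τ₁ + a2 * t0 / y τ₁ + a3 * (t0 - 1) / (y τ₁ - 1)
        + a4 * t0 * (t0 - 1) / (y τ₁ - t0))
      =
      (t0^2 * (t0 - 1)^2 * (deriv y τ₂)^2
          / (2 * y τ₂ * (y τ₂ - 1) * (y τ₂ - t0))
        - a1 * y τ₂ + a2 * t0 / y τ₂ + a3 * (t0 - 1) / (y τ₂ - 1)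
        + a4 * t0 * (t0 - 1) / (y τ₂ - t0)) := by
  have hP : ∀ τ : ℝ, 2 * y τ * (y τ - 1) * (y τ - t0) ≠ 0 := fun τ => by
    obtain ⟨h0, h1, h2⟩ := hvals τ
    exact mul_ne_zero (mul_ne_zero (mul_ne_zero two_ne_zero h0) (sub_ne_zero.2 h1))
      (sub_ne_zero.2 h2)
  have hD : ∀ τ : ℝ, HasDerivAt (fun τ : ℝ =>
      t0^2 * (t0 - 1)^2 * (deriv y τ)^2 / (2 * y τ * (y τ - 1) * (y τ - t0))
        - a1 * y τ + a2 * t0 / y τ + a3 * (t0 - 1) / (y τ - 1)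
        + a4 * t0 * (t0 - 1) / (y τ - t0)) 0 τ := by
    intro τ
    obtain ⟨h0, h1, h2⟩ := hvals τ
    have h1' := sub_ne_zero.2 h1
    have h2' := sub_ne_zero.2 h2
    have ht1' := sub_ne_zero.2 ht1
    have d := (hy τ).hasDerivAt
    have d' := (hy' τ).hasDerivAt
    have dP := ((d.const_mul 2).mul (d.sub_const 1)).mul (d.sub_const t0)
    have dKin := ((d'.pow 2).const_mul (t0^2 * (t0 - 1)^2)).div dP (hP τ)
    have dD := (((dKin.sub (d.const_mul a1)).add
      ((hasDerivAt_const τ (a2 * t0)).div d h0)).add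
      ((hasDerivAt_const τ (a3 * (t0 - 1))).div (d.sub_const 1) h1')).add
      ((hasDerivAt_const τ (a4 * t0 * (t0 - 1))).div (d.sub_const t0) h2')
    refine dD.congr_deriv ?_
    rw [hode τ]
    simp only [Pi.mul_apply, Pi.pow_apply]
    field_simp
    ring
  exact is_const_of_deriv_eq_zero (fun τ => (hD τ).differentiableAt) fun τ => (hD τ).deriv
end

section
/- Let g ≥ 1 and let C, B̂ ∈ Matrix (Fin g) (Fin g) ℂ. Let conj denote entrywise complex conjugation of matrices, and let Im B̂ ∈ Matrix (Fin g) (Fin g) ℝ be the matrix of imaginary parts of the entries of B̂. Then the 2g × 2g block matrix ω = fromBlocks C (conj C) (B̂·C) (conj(B̂·C)) satisfies det ω = (−2i)^g · det C · conj(det C) · (det(Im B̂) : ℂ); i.e. det ω = (−2i)^g |det C|² det(Im B̂). -/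
/-!
The period matrix is the product of `fromBlocks 1 1 B̂ (conj B̂)` and the block-diagonal matrix with
blocks `C` and `conj C`. By the Schur complement of the identity block, the first factor has
determinant `det (conj B̂ - B̂)`, and `conj B̂ - B̂ = -2i • Im B̂`; the second has determinant
`det C * conj (det C)`.
-/

open Matrix

/-- Determinant of the matrix of `A`- and `B`-periods of the holomorphic
differentials and their complex conjugates:
`det (fromBlocks C C̄ (B̂C) (conj(B̂C))) = (−2i)^g · det C · conj(det C) · det(Im B̂)`. -/
theorem period_matrix_det
    (g : ℕ) (hg : 1 ≤ g) (C Bh : Matrix (Fin g) (Fin g) ℂ) :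
    (Matrix.fromBlocks C (C.map (starRingEnd ℂ))
        (Bh * C) ((Bh * C).map (starRingEnd ℂ))).det =
      (-2 * Complex.I) ^ g * C.det * (starRingEnd ℂ) C.det *
        ((Matrix.det (fun i j : Fin g => (Bh i j).im) : ℝ) : ℂ) := by
  -- Factoring out the block-diagonal matrix of `C` and its conjugate avoids inverting `C`.
  have factor : Matrix.fromBlocks C (C.map (starRingEnd ℂ))
        (Bh * C) ((Bh * C).map (starRingEnd ℂ)) =
      Matrix.fromBlocks 1 1 Bh (Bh.map (starRingEnd ℂ)) *
        Matrix.fromBlocks C 0 0 (C.map (starRingEnd ℂ)) := by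
    simp [Matrix.fromBlocks_multiply, Matrix.map_mul]
  have conj_sub : Bh.map (starRingEnd ℂ) - Bh =
      (-2 * Complex.I) • (Matrix.of fun i j : Fin g => (Bh i j).im).map Complex.ofRealHom := by
    ext i j
    apply Complex.ext <;> simp
    ring
  have det_im : ((Matrix.of fun i j : Fin g => (Bh i j).im).map Complex.ofRealHom).det =
      ((Matrix.det (fun i j : Fin g => (Bh i j).im) : ℝ) : ℂ) :=
    (Complex.ofRealHom.map_det _).symm
  have det_conj : (C.map (starRingEnd ℂ)).det = (starRingEnd ℂ) C.det :=
    ((starRingEnd ℂ).map_det C).symm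
  rw [factor, Matrix.det_mul, Matrix.det_fromBlocks_one₁₁, Matrix.det_fromBlocks_zero₂₁,
    Matrix.mul_one, conj_sub, Matrix.det_smul, Fintype.card_fin, det_im, det_conj]
  ring
end
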